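/- arXiv:2505.16757 — 2 statements merged into one kernel-verified Lean document; each statement's English description precedes it below -/
import Mathlib

section
/- Fix α ≥ 0, set α₋ = α and α₊ = √(α² + 1), let γ₊, γ₋ ∈ ℝ, and let L_α(γ±) := (1+α²)γ₊ − α²γ₋. Then for every sufficiently small δ > 0 (so that α±(1 ± δγ±) ≥ 0 and the quantity λ² below is positive), the identity Φ_{α₊(1+δγ₊), α₋(1+δγ₋)}(z) = Φ_{α'}(λ z) holds for all z ∈ ℝ, where λ² = 1 + 2δL_α(γ±) + δ²((γ₊+γ₋)L_α(γ±) − γ₊γ₋) and α' = αλ^{−1}(1+δγ₋). -/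
noncomputable section

/-- The two-plane function Φ_{β₊,β₋}(z) = β₊ max{z,0} + β₋ min{z,0}. -/
def Phi2 (bp bm z : ℝ) : ℝ := bp * max z 0 + bm * min z 0

/-!
Since `Φ` is positively homogeneous in `z`, a two-plane function with slopes `β₊ ≥ 0` and `β₋`
equals `Φ_{α'}(λ z)` with `λ > 0` exactly when `λ √(1 + α'²) = β₊` and `λ α' = β₋`. Eliminating
`α'` leaves `λ² = β₊² - β₋²`, and the formula for `λ²` is this difference expanded in powers of `δ`.
-/

lemma Phi2_mul_of_nonneg {c : ℝ} (hc : 0 ≤ c) (bp bm z : ℝ) :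
    Phi2 bp bm (c * z) = Phi2 (bp * c) (bm * c) z := by
  have max_scale : max (c * z) 0 = c * max z 0 := by
    rw [mul_max_of_nonneg _ _ hc, mul_zero]
  have min_scale : min (c * z) 0 = c * min z 0 := by
    rw [mul_min_of_nonneg _ _ hc, mul_zero]
  simp only [Phi2, max_scale, min_scale, mul_assoc]

lemma sqrt_one_add_div_sq_of_sq_sub_sq_eq_sq {a b c : ℝ} (ha : 0 ≤ a) (hc : 0 < c)
    (h : a ^ 2 - b ^ 2 = c ^ 2) : √(1 + (b / c) ^ 2) = a / c := by
  have sq_quotient : 1 + (b / c) ^ 2 = (a / c) ^ 2 := by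
    field_simp
    linarith
  rw [sq_quotient, Real.sqrt_sq (by positivity)]

lemma Phi2_eq_Phi2_sqrt_one_add_div_sq {bp bm c : ℝ} (hbp : 0 ≤ bp) (hc : 0 < c)
    (h : bp ^ 2 - bm ^ 2 = c ^ 2) (z : ℝ) :
    Phi2 bp bm z = Phi2 √(1 + (bm / c) ^ 2) (bm / c) (c * z) := by
  rw [Phi2_mul_of_nonneg hc.le, sqrt_one_add_div_sq_of_sq_sub_sq_eq_sq hbp hc h,
    div_mul_cancel₀ _ hc.ne', div_mul_cancel₀ _ hc.ne']

lemma perturbed_slope_sq_sub_sq (α γp γm δ : ℝ) :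
    (√(α ^ 2 + 1) * (1 + δ * γp)) ^ 2 - (α * (1 + δ * γm)) ^ 2 =
      1 + 2 * δ * ((1 + α ^ 2) * γp - α ^ 2 * γm) +
        δ ^ 2 * ((γp + γm) * ((1 + α ^ 2) * γp - α ^ 2 * γm) - γp * γm) := by
  rw [mul_pow, Real.sq_sqrt (by positivity)]
  ring

theorem statement18_general (α γp γm L lam2 lam α' : ℝ)
    (hL : L = (1 + α ^ 2) * γp - α ^ 2 * γm) (δ : ℝ)
    (hlam2 : lam2 = 1 + 2 * δ * L + δ ^ 2 * ((γp + γm) * L - γp * γm))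
    (hap : 0 ≤ √(α ^ 2 + 1) * (1 + δ * γp)) (hpos : 0 < lam2)
    (hlam : lam = √lam2) (hα' : α' = α * (1 + δ * γm) / lam) (z : ℝ) :
    Phi2 (√(α ^ 2 + 1) * (1 + δ * γp)) (α * (1 + δ * γm)) z =
      Phi2 √(1 + α' ^ 2) α' (lam * z) := by
  have lam_pos : 0 < lam := hlam ▸ Real.sqrt_pos.mpr hpos
  have slopes : (√(α ^ 2 + 1) * (1 + δ * γp)) ^ 2 - (α * (1 + δ * γm)) ^ 2 = lam ^ 2 := by
    rw [perturbed_slope_sq_sub_sq, hlam, Real.sq_sqrt hpos.le, hlam2, hL]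
  rw [hα']
  exact Phi2_eq_Phi2_sqrt_one_add_div_sq hap lam_pos slopes z

/-- Lemma A.3, slope recombination identity:
with α₋ = α, α₊ = √(α²+1), L = L_α(γ±) = (1+α²)γ₊ − α²γ₋,
λ² = 1 + 2δL + δ²((γ₊+γ₋)L − γ₊γ₋) and α' = αλ⁻¹(1+δγ₋), one has
Φ_{α₊(1+δγ₊),α₋(1+δγ₋)}(z) = Φ_{α'}(λz) for all z, for every δ > 0 small
enough that α±(1±δγ±) ≥ 0 and λ² > 0. -/
theorem statement18 (α γp γm : ℝ) (hα : 0 ≤ α) (L lam2 lam α' : ℝ)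
    (hL : L = (1 + α^2) * γp - α^2 * γm)
    (δ : ℝ) (hδ : 0 < δ)
    (hlam2 : lam2 = 1 + 2*δ*L + δ^2*((γp + γm)*L - γp*γm))
    (hap : 0 ≤ Real.sqrt (α^2 + 1) * (1 + δ*γp))
    (ham : 0 ≤ α * (1 + δ*γm))
    (hpos : 0 < lam2)
    (hlam : lam = Real.sqrt lam2)
    (hα' : α' = α * (1 + δ*γm) / lam) :
    ∀ z : ℝ,
      Phi2 (Real.sqrt (α^2 + 1) * (1 + δ*γp)) (α * (1 + δ*γm)) z
        = Phi2 (Real.sqrt (1 + α'^2)) α' (lam * z) :=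
  statement18_general α γp γm L lam2 lam α' hL δ hlam2 hap hpos hlam hα'
end
end

section
/- Let u : B_r → ℝ (r > 0, B_r ⊂ ℝ^d), let α₀, α₁ > 0, let e₀, e₁ be unit vectors, and let 0 < η < 1/100. If sup_{x ∈ B_r} |Ψ_{α₀}(u(x)) − x·e₀| ≤ ηr and sup_{x ∈ B_r} |Ψ_{α₁}(u(x)) − x·e₁| ≤ ηr, then |√(1+α₀²)/√(1+α₁²) − 1| ≤ 24η and |e₁ − e₀| ≤ 6√η. -/
open Metric
noncomputable section

abbrev Ed (d : ℕ) : Type := EuclideanSpace ℝ (Fin d)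

/-- The inverse two-plane profile Ψ_α(t) = max{t,0}/√(1+α²) + min{t,0}/α. -/
def Psi (α t : ℝ) : ℝ := max t 0 / Real.sqrt (1 + α^2) + min t 0 / α

/-!
Where `Ψ_α(t)` is positive, so is `t`, and there two profiles differ by the constant factor
`q = √(1+α₀²)/√(1+α₁²)`. Evaluating both closeness hypotheses at `s • e₀` and letting `s → r` gives
`q (1 - η) ≤ ⟪e₀, e₁⟫ + η`, and by symmetry `q⁻¹ (1 - η) ≤ ⟪e₀, e₁⟫ + η`. Since `q` or `q⁻¹` is at
least `1`, this forces `⟪e₀, e₁⟫ ≥ 1 - 2η`, so the directions are close; since `⟪e₀, e₁⟫ ≤ 1`, both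
`q` and `q⁻¹` are at most `(1 + η)/(1 - η)`.
-/

lemma Psi_of_nonneg (α : ℝ) {t : ℝ} (ht : 0 ≤ t) : Psi α t = t / √(1 + α ^ 2) := by
  simp [Psi, ht]

lemma Psi_nonpos {α t : ℝ} (hα : 0 < α) (ht : t ≤ 0) : Psi α t ≤ 0 := by
  simpa [Psi, ht] using div_nonpos_of_nonpos_of_nonneg ht hα.le

lemma Psi_eq_sqrt_div_sqrt_mul_Psi {α t : ℝ} (β : ℝ) (hα : 0 < α) (hpos : 0 < Psi α t) :
    Psi β t = √(1 + α ^ 2) / √(1 + β ^ 2) * Psi α t := by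
  have ht : 0 < t := lt_of_not_ge fun ht ↦ (Psi_nonpos hα ht).not_gt hpos
  rw [Psi_of_nonneg α ht.le, Psi_of_nonneg β ht.le]
  field

lemma sqrt_div_sqrt_mul_sub_le {α β t a b δ : ℝ} (hα : 0 < α) (hδ : δ < a)
    (ha : |Psi α t - a| ≤ δ) (hb : |Psi β t - b| ≤ δ) :
    √(1 + α ^ 2) / √(1 + β ^ 2) * (a - δ) ≤ b + δ := by
  have hlower : a - δ ≤ Psi α t := sub_le_of_abs_sub_le_left ha
  calc √(1 + α ^ 2) / √(1 + β ^ 2) * (a - δ)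
      ≤ √(1 + α ^ 2) / √(1 + β ^ 2) * Psi α t := by gcongr
    _ = Psi β t := (Psi_eq_sqrt_div_sqrt_mul_Psi β hα ((sub_pos.2 hδ).trans_le hlower)).symm
    _ ≤ b + δ := by linarith [(abs_le.1 hb).2]

lemma one_sub_two_mul_le_of_mul_le_of_inv_mul_le {q c η : ℝ} (hq : 0 < q) (hη : η < 1)
    (h : q * (1 - η) ≤ c + η) (hinv : q⁻¹ * (1 - η) ≤ c + η) : 1 - 2 * η ≤ c := by
  have hη' : 0 ≤ 1 - η := by linarith
  rcases le_total 1 q with hone | hone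
  · linarith [le_mul_of_one_le_left hη' hone]
  · linarith [le_mul_of_one_le_left hη' ((one_le_inv₀ hq).2 hone)]

lemma abs_sub_one_le_of_mul_le_of_inv_mul_le {q η : ℝ} (hq : 0 < q) (hη₀ : 0 ≤ η) (hη₁ : η < 1)
    (h : q * (1 - η) ≤ 1 + η) (hinv : q⁻¹ * (1 - η) ≤ 1 + η) :
    |q - 1| ≤ 2 * η / (1 - η) := by
  have hη' : 0 < 1 - η := by linarith
  have hlower : 1 - η ≤ q * (1 + η) := (inv_mul_le_iff₀ hq).1 hinv
  refine abs_sub_le_iff.2 ⟨(le_div_iff₀ hη').2 (by linarith), ?_⟩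
  calc 1 - q ≤ 2 * η / (1 + η) := (le_div_iff₀ (by linarith)).2 (by linarith)
    _ ≤ 2 * η / (1 - η) := by gcongr; linarith

section InnerProductSpace

variable {E : Type*} [NormedAddCommGroup E] [InnerProductSpace ℝ E]

lemma norm_sub_le_two_mul_sqrt {e f : E} {η : ℝ} (he : ‖e‖ = 1) (hf : ‖f‖ = 1)
    (h : 1 - 2 * η ≤ inner ℝ e f) : ‖f - e‖ ≤ 2 * √η := by
  have hsq : ‖f - e‖ ^ 2 ≤ 2 ^ 2 * η := by
    rw [norm_sub_sq_real, he, hf, real_inner_comm]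
    linarith
  calc ‖f - e‖ ≤ √(2 ^ 2 * η) := Real.le_sqrt_of_sq_le hsq
    _ = 2 * √η := by rw [Real.sqrt_mul (by norm_num), Real.sqrt_sq zero_le_two]

variable {r α β η : ℝ} {e f : E} {u : E → ℝ}

lemma sqrt_div_sqrt_mul_one_sub_le_inner_add (hr : 0 < r) (hα : 0 < α) (he : ‖e‖ = 1) (hη : η < 1)
    (hu : ∀ x ∈ ball (0 : E) r, |Psi α (u x) - inner ℝ x e| ≤ η * r)
    (hv : ∀ x ∈ ball (0 : E) r, |Psi β (u x) - inner ℝ x f| ≤ η * r) :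
    √(1 + α ^ 2) / √(1 + β ^ 2) * (1 - η) ≤ inner ℝ e f + η := by
  set q := √(1 + α ^ 2) / √(1 + β ^ 2)
  have hηr : 0 ≤ η * r := (abs_nonneg _).trans (hu 0 (mem_ball_self hr))
  have hηr' : η * r < r := mul_lt_of_lt_one_left hr hη
  have hinterior : ∀ s ∈ Set.Ioo (η * r) r, q * (s - η * r) ≤ s * inner ℝ e f + η * r := by
    rintro s ⟨hs, hsr⟩
    have hmem : s • e ∈ ball (0 : E) r := by
      rwa [mem_ball_zero_iff, norm_smul, he, mul_one, Real.norm_of_nonneg (hηr.trans hs.le)]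
    have hue := hu _ hmem
    have hvf := hv _ hmem
    rw [real_inner_smul_left, real_inner_self_eq_norm_sq, he, one_pow, mul_one] at hue
    rw [real_inner_smul_left] at hvf
    exact sqrt_div_sqrt_mul_sub_le hα hs hue hvf
  have hboundary : q * (r - η * r) ≤ r * inner ℝ e f + η * r :=
    le_on_closure hinterior (by fun_prop) (by fun_prop)
      (by simpa only [closure_Ioo hηr'.ne] using Set.right_mem_Icc.2 hηr'.le)
  exact le_of_mul_le_mul_left (by linarith) hr

theorem statement19_general {α₀ α₁ : ℝ} {e₀ e₁ : E} (hr : 0 < r) (hα₀ : 0 < α₀) (hα₁ : 0 < α₁)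
    (he₀ : ‖e₀‖ = 1) (he₁ : ‖e₁‖ = 1) (hη : η < 1)
    (hu₀ : ∀ x ∈ ball (0 : E) r, |Psi α₀ (u x) - inner ℝ x e₀| ≤ η * r)
    (hu₁ : ∀ x ∈ ball (0 : E) r, |Psi α₁ (u x) - inner ℝ x e₁| ≤ η * r) :
    |√(1 + α₀ ^ 2) / √(1 + α₁ ^ 2) - 1| ≤ 2 * η / (1 - η) ∧ ‖e₁ - e₀‖ ≤ 2 * √η := by
  have hq : 0 < √(1 + α₀ ^ 2) / √(1 + α₁ ^ 2) := by positivity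
  have hratio := sqrt_div_sqrt_mul_one_sub_le_inner_add hr hα₀ he₀ hη hu₀ hu₁
  have hratio_inv := sqrt_div_sqrt_mul_one_sub_le_inner_add hr hα₁ he₁ hη hu₁ hu₀
  rw [← inv_div, real_inner_comm] at hratio_inv
  have hlower := one_sub_two_mul_le_of_mul_le_of_inv_mul_le hq hη hratio hratio_inv
  have hupper : inner ℝ e₀ e₁ ≤ 1 := by
    simpa [he₀, he₁] using real_inner_le_norm e₀ e₁
  exact ⟨abs_sub_one_le_of_mul_le_of_inv_mul_le hq (by linarith) hη (by linarith) (by linarith),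
    norm_sub_le_two_mul_sqrt he₀ he₁ hlower⟩

end InnerProductSpace

/-- Lemma 7.3: if u is η r-close in B_r to two-plane
profiles with data (α₀,e₀) and (α₁,e₁) and η < 1/100, then the slopes and
directions nearly agree:
|√(1+α₀²)/√(1+α₁²) − 1| ≤ 24η and |e₁ − e₀| ≤ 6√η. -/
theorem statement19 (d : ℕ) (hd : 2 ≤ d) (r α₀ α₁ η : ℝ) (e₀ e₁ : Ed d)
    (hr : 0 < r) (hα₀ : 0 < α₀) (hα₁ : 0 < α₁)
    (he₀ : ‖e₀‖ = 1) (he₁ : ‖e₁‖ = 1)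
    (hη : 0 < η) (hη' : η < 1/100)
    (u : Ed d → ℝ)
    (hu₀ : ∀ x ∈ ball (0 : Ed d) r, |Psi α₀ (u x) - (inner ℝ x e₀ : ℝ)| ≤ η * r)
    (hu₁ : ∀ x ∈ ball (0 : Ed d) r, |Psi α₁ (u x) - (inner ℝ x e₁ : ℝ)| ≤ η * r) :
    |Real.sqrt (1 + α₀^2) / Real.sqrt (1 + α₁^2) - 1| ≤ 24 * η ∧
    ‖e₁ - e₀‖ ≤ 6 * Real.sqrt η := by
  obtain ⟨hratio, hdir⟩ := statement19_general hr hα₀ hα₁ he₀ he₁ (by linarith) hu₀ hu₁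
  have hconst : 2 * η / (1 - η) ≤ 24 * η := by
    rw [div_le_iff₀ (by linarith)]
    nlinarith
  exact ⟨hratio.trans hconst, hdir.trans (by gcongr; norm_num)⟩
end
end
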